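/- Let N₁, N₂, T be positive integers and define the N₁T×N₁T matrix ℍ₁ := I_{N₁} ⊗ ((N₂ I_T + J_T)/T) + (1/T) J_{N₁} ⊗ I_T. Then ℍ₁ is invertible and its inverse satisfies ‖ℍ₁⁻¹‖_∞ < 2 · (T/N₂) · (1 + 2·(N₁/N₂)). -/

import Mathlib

open Matrix
open scoped Kronecker

/-- The `n × n` all-ones matrix `J_n = ι_n ι_nᵀ`. -/
noncomputable def Jmat (n : ℕ) : Matrix (Fin n) (Fin n) ℝ :=
  Matrix.of fun _ _ => (1 : ℝ)

/-- `ℍ₁ = I_{N₁} ⊗ ((N₂ I_T + J_T)/T) + (1/T) J_{N₁} ⊗ I_T`. -/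
noncomputable def Hmat (N₁ N₂ T : ℕ) : Matrix (Fin N₁ × Fin T) (Fin N₁ × Fin T) ℝ :=
  (1 : Matrix (Fin N₁) (Fin N₁) ℝ) ⊗ₖ
      ((T : ℝ)⁻¹ • ((N₂ : ℝ) • (1 : Matrix (Fin T) (Fin T) ℝ) + Jmat T)) +
    (T : ℝ)⁻¹ • (Jmat N₁ ⊗ₖ (1 : Matrix (Fin T) (Fin T) ℝ))

/-- The operator norm induced by the `ℓ^∞` vector norms, i.e. the maximum
absolute row sum of the matrix. -/
noncomputable def rowSumNorm {m n : Type*} [Fintype n] (A : Matrix m n ℝ) : ℝ :=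
  ⨆ i, ∑ j, |A i j|

theorem Jmat_sq (n : ℕ) : Jmat n * Jmat n = (n : ℝ) • Jmat n := by
  ext i j
  simp [Jmat, Matrix.mul_apply]

theorem row_bound (n N T : ℝ) (hn : 0 < n) (hN : 0 < N) (hT : 0 < T) :
    T * (1 / n + T * (1 / (n * (n + T))) + N * (1 / (n * (n + N))) +
      N * T * ((2 * n + N + T) / (n * (n + T) * (n + N) * (n + N + T)))) <
    2 * (T / n) * (1 + 2 * (N / n)) := by
  have e1 : T / (n + T) < 1 := by
    rw [div_lt_one (by positivity)]; linarith
  have e2 : N / (n + N) ≤ N / n := by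
    apply div_le_div_of_nonneg_left <;> linarith
  have e3 : T * (2 * n + N + T) / ((n + T) * (n + N + T)) ≤ 1 := by
    rw [div_le_one (by positivity)]
    nlinarith [mul_pos hn hN, mul_pos hn hT, mul_pos hn hn]
  have e4 : N / (n + N) * (T * (2 * n + N + T) / ((n + T) * (n + N + T))) ≤ N / (n + N) :=
    mul_le_of_le_one_right (by positivity) e3
  have e5 : 0 < N / n := by positivity
  have e : T * (1 / n + T * (1 / (n * (n + T))) + N * (1 / (n * (n + N))) +
      N * T * ((2 * n + N + T) / (n * (n + T) * (n + N) * (n + N + T)))) =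
      T / n * (1 + T / (n + T) + N / (n + N) +
        N / (n + N) * (T * (2 * n + N + T) / ((n + T) * (n + N + T)))) := by
    field_simp
  rw [e, mul_comm 2 (T / n), mul_assoc]
  apply mul_lt_mul_of_pos_left _ (by positivity)
  linarith

/-- The explicit inverse. -/
noncomputable def Gmat (N₁ N₂ T : ℕ) : Matrix (Fin N₁ × Fin T) (Fin N₁ × Fin T) ℝ :=
  ((T : ℝ) * (1 / N₂)) • ((1 : Matrix (Fin N₁) (Fin N₁) ℝ) ⊗ₖ (1 : Matrix (Fin T) (Fin T) ℝ))
  + (-((T : ℝ) * (1 / (N₂ * (N₂ + T))))) • ((1 : Matrix (Fin N₁) (Fin N₁) ℝ) ⊗ₖ Jmat T)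
  + (-((T : ℝ) * (1 / (N₂ * (N₂ + N₁))))) • (Jmat N₁ ⊗ₖ (1 : Matrix (Fin T) (Fin T) ℝ))
  + ((T : ℝ) * ((2 * N₂ + N₁ + T) / (N₂ * (N₂ + T) * (N₂ + N₁) * (N₂ + N₁ + T)))) •
      (Jmat N₁ ⊗ₖ Jmat T)

theorem H_mul_G (N₁ N₂ T : ℕ) (h₁ : 0 < N₁) (h₂ : 0 < N₂) (hT : 0 < T) :
    Hmat N₁ N₂ T * Gmat N₁ N₂ T = 1 := by
  have h1 : (0 : ℝ) < N₁ := by exact_mod_cast h₁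
  have h2 : (0 : ℝ) < N₂ := by exact_mod_cast h₂
  have h3 : (0 : ℝ) < T := by exact_mod_cast hT
  rw [← Matrix.one_kronecker_one]
  simp only [Hmat, Gmat, Matrix.kronecker_add, Matrix.kronecker_smul, Matrix.add_mul,
    Matrix.mul_add, Matrix.smul_mul, Matrix.mul_smul, ← Matrix.mul_kronecker_mul, Jmat_sq,
    Matrix.one_mul, Matrix.mul_one, Matrix.smul_kronecker, smul_add]
  match_scalars <;> field_simp <;> ring

theorem G_row (N₁ N₂ T : ℕ) (h₁ : 0 < N₁) (h₂ : 0 < N₂) (hT : 0 < T) (i : Fin N₁ × Fin T) :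
    ∑ j, |Gmat N₁ N₂ T i j| ≤ (T : ℝ) * (1 / N₂ + T * (1 / (N₂ * (N₂ + T)))
      + N₁ * (1 / (N₂ * (N₂ + N₁))) +
      N₁ * T * ((2 * N₂ + N₁ + T) / (N₂ * (N₂ + T) * (N₂ + N₁) * (N₂ + N₁ + T)))) := by
  obtain ⟨i, t⟩ := i
  set a : ℝ := (T : ℝ) * (1 / N₂) with ha
  set b : ℝ := (T : ℝ) * (1 / (N₂ * (N₂ + T))) with hb
  set c : ℝ := (T : ℝ) * (1 / (N₂ * (N₂ + N₁))) with hc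
  set d : ℝ := (T : ℝ) * ((2 * N₂ + N₁ + T) / (N₂ * (N₂ + T) * (N₂ + N₁) * (N₂ + N₁ + T)))
    with hd
  have ha0 : 0 ≤ a := by positivity
  have hb0 : 0 ≤ b := by positivity
  have hc0 : 0 ≤ c := by positivity
  have hd0 : 0 ≤ d := by positivity
  calc ∑ j, |Gmat N₁ N₂ T (i, t) j|
      ≤ ∑ j : Fin N₁ × Fin T, (a * ((if i = j.1 then 1 else 0) * (if t = j.2 then 1 else 0))
        + b * (if i = j.1 then 1 else 0) + c * (if t = j.2 then 1 else 0) + d) := by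
        apply Finset.sum_le_sum
        rintro ⟨j, s⟩ -
        simp only [Gmat, Jmat, Matrix.add_apply, Matrix.smul_apply, Matrix.kronecker_apply,
          Matrix.one_apply, Matrix.of_apply, smul_eq_mul, ← ha, ← hb, ← hc, ← hd]
        rw [abs_le]
        split_ifs <;> constructor <;> linarith
    _ = a + T * b + N₁ * c + N₁ * T * d := by
        rw [Fintype.sum_prod_type]
        simp [Finset.sum_add_distrib, ← Finset.mul_sum]
        ring
    _ ≤ _ := by
        rw [ha, hb, hc, hd]
        apply le_of_eq
        ring

/-- `ℍ₁` is invertible and `‖ℍ₁⁻¹‖_∞ < 2 (T/N₂)(1 + 2 N₁/N₂)`. -/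
theorem stmt_11 (N₁ N₂ T : ℕ) (h₁ : 0 < N₁) (h₂ : 0 < N₂) (hT : 0 < T) :
    IsUnit (Hmat N₁ N₂ T) ∧
      rowSumNorm (Hmat N₁ N₂ T)⁻¹ <
        2 * ((T : ℝ) / (N₂ : ℝ)) * (1 + 2 * ((N₁ : ℝ) / (N₂ : ℝ))) := by
  have h := H_mul_G N₁ N₂ T h₁ h₂ hT
  refine ⟨IsUnit.of_mul_eq_one _ h, ?_⟩
  rw [Matrix.inv_eq_right_inv h]
  haveI : Nonempty (Fin N₁ × Fin T) := ⟨(⟨0, h₁⟩, ⟨0, hT⟩)⟩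
  refine lt_of_le_of_lt (ciSup_le (G_row N₁ N₂ T h₁ h₂ hT)) ?_
  exact row_bound N₂ N₁ T (by exact_mod_cast h₂) (by exact_mod_cast h₁) (by exact_mod_cast hT)
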